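/- Let P be a reversible Markov matrix (in the closure of reversible matrices with positive stationary distribution) on a state space of size N ≥ 2 with all eigenvalues nonnegative and absolute spectral gap 1 - β_⋆ > 0. Then for every 0 < ε < 1, t_mix(ε) ≤ (N + 2 log(1/ε) - 1 + sqrt(2(N-2) log(1/ε))) · t_rel. -/

import Mathlib

/-- The closure of the set of Markov matrices reversible with respect to a strictly
positive stationary distribution. -/
def RevClosure (N : ℕ) : Set (Matrix (Fin N) (Fin N) ℝ) :=
  closure {M | (∀ i j, 0 ≤ M i j) ∧ (∀ i, ∑ j, M i j = 1) ∧
    ∃ p : Fin N → ℝ, (∀ i, 0 < p i) ∧ (∑ i, p i = 1) ∧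
      ∀ i j, p i * M i j = p j * M j i}

/-!
For a nonnegative symmetric matrix the products `∏ i > k, (A - yᵢ)` over the smallest eigenvalues
are nonnegative (Micchelli–Willoughby): they are the coefficients of `adj (X - A)` in the Newton
basis `∏ i < k, (X - yᵢ)`, and by induction on the size, using Cauchy interlacing, the entries of
the adjugate are nonnegative combinations of that basis. The property passes to matrices in
detailed balance, by a diagonal conjugation, and to their limits, by compactness of the spectra.

Normalized to stochastic matrices `E k`, these products satisfy
`P * E (k + 1) = y (k + 1) • E (k + 1) + (1 - y (k + 1)) • E k`, where `E 0` has all rows equal to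
the stationary law and the last `E k` is the identity. Hence the distance to stationarity at time
`t` is at most the probability that a pure death chain on `{0, …, N - 1}`, started at `N - 1` and
holding at `k` with probability `y k`, has not been absorbed at `0`. With `y k ≤ b` this is at most
the probability that a binomial variable with parameters `t` and `1 - b` is at most `N - 2`, which
Chernoff's inequality bounds.
-/

section Interlacing

open Module
open scoped InnerProductSpace

variable {𝕜 E F : Type*} [RCLike 𝕜]
  [NormedAddCommGroup E] [InnerProductSpace 𝕜 E] [FiniteDimensional 𝕜 E]
  [NormedAddCommGroup F] [InnerProductSpace 𝕜 F] [FiniteDimensional 𝕜 F]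
  {T : E →ₗ[𝕜] E} {S : F →ₗ[𝕜] F} {m n : ℕ}

lemma re_inner_map_self_eq_sum_eigenvalues (hT : T.IsSymmetric) (hn : finrank 𝕜 E = n) (x : E) :
    RCLike.re ⟪x, T x⟫_𝕜 =
      ∑ k, hT.eigenvalues hn k * ‖⟪hT.eigenvectorBasis hn k, x⟫_𝕜‖ ^ 2 := by
  rw [← (hT.eigenvectorBasis hn).sum_inner_mul_inner, map_sum]
  refine Finset.sum_congr rfl fun k _ => ?_
  rw [← hT, hT.apply_eigenvectorBasis, inner_smul_left, RCLike.conj_ofReal, mul_left_comm,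
    RCLike.re_ofReal_mul, inner_mul_symm_re_eq_norm, norm_mul, norm_inner_symm x, sq]

lemma re_inner_map_self_le_eigenvalues_mul (hT : T.IsSymmetric) (hn : finrank 𝕜 E = n)
    {x : E} {j : Fin n} (hx : ∀ k < j, ⟪hT.eigenvectorBasis hn k, x⟫_𝕜 = 0) :
    RCLike.re ⟪x, T x⟫_𝕜 ≤ hT.eigenvalues hn j * ‖x‖ ^ 2 := by
  rw [re_inner_map_self_eq_sum_eigenvalues hT hn,
    ← (hT.eigenvectorBasis hn).sum_sq_norm_inner_right, Finset.mul_sum]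
  refine Finset.sum_le_sum fun k _ => ?_
  rcases lt_or_ge k j with hk | hk
  · simp [hx k hk]
  · gcongr
    exact hT.eigenvalues_antitone hn hk

lemma eigenvalues_mul_le_re_inner_map_self (hT : T.IsSymmetric) (hn : finrank 𝕜 E = n)
    {x : E} {i : Fin n} (hx : ∀ k > i, ⟪hT.eigenvectorBasis hn k, x⟫_𝕜 = 0) :
    hT.eigenvalues hn i * ‖x‖ ^ 2 ≤ RCLike.re ⟪x, T x⟫_𝕜 := by
  rw [re_inner_map_self_eq_sum_eigenvalues hT hn,
    ← (hT.eigenvectorBasis hn).sum_sq_norm_inner_right, Finset.mul_sum]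
  refine Finset.sum_le_sum fun k _ => ?_
  rcases lt_or_ge i k with hk | hk
  · simp [hx k hk]
  · gcongr
    exact hT.eigenvalues_antitone hn hk

theorem eigenvalues_compression_le (hT : T.IsSymmetric) (hn : finrank 𝕜 E = n)
    (hS : S.IsSymmetric) (hm : finrank 𝕜 F = m) (J : F →ₗᵢ[𝕜] E)
    (hJ : ∀ x, ⟪J x, T (J x)⟫_𝕜 = ⟪x, S x⟫_𝕜) {i : Fin m} {j : Fin n} (hji : (j : ℕ) ≤ i) :
    hS.eigenvalues hm i ≤ hT.eigenvalues hn j := by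
  let conditions : F →ₗ[𝕜] (Set.Iio j → 𝕜) × (Set.Ioi i → 𝕜) :=
    (LinearMap.pi fun k : Set.Iio j =>
      (innerₛₗ 𝕜 (hT.eigenvectorBasis hn k)).comp J.toLinearMap).prod
      (LinearMap.pi fun k : Set.Ioi i => innerₛₗ 𝕜 (hS.eigenvectorBasis hm k))
  have hdim : finrank 𝕜 ((Set.Iio j → 𝕜) × (Set.Ioi i → 𝕜)) < finrank 𝕜 F := by
    simp [hm]
    omega
  obtain ⟨x, hx, hx0⟩ :=
    (Submodule.ne_bot_iff _).1 (LinearMap.ker_ne_bot_of_finrank_lt (f := conditions) hdim)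
  obtain ⟨hxT, hxS⟩ := Prod.mk.inj (LinearMap.mem_ker.1 hx)
  have hlower := eigenvalues_mul_le_re_inner_map_self hS hm (x := x) (i := i)
    fun k hk => congrFun hxS ⟨k, hk⟩
  have hupper := re_inner_map_self_le_eigenvalues_mul hT hn (x := J x) (j := j)
    fun k hk => congrFun hxT ⟨k, hk⟩
  rw [hJ, J.norm_map] at hupper
  exact le_of_mul_le_mul_right (hlower.trans hupper) (by positivity)

end Interlacing

section SortedEigenvalues

open Matrix Lagrange

variable {n : ℕ} {A : Matrix (Fin n) (Fin n) ℝ}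

/-- The eigenvalues of a real symmetric matrix with multiplicity, in decreasing order. Unlike
`Matrix.IsHermitian.eigenvalues`, they are indexed in their order. -/
noncomputable def sortedEigenvalues (hA : A.IsHermitian) : Fin n → ℝ :=
  (isSymmetric_toEuclideanLin_iff.2 hA).eigenvalues finrank_euclideanSpace_fin

lemma sortedEigenvalues_antitone (hA : A.IsHermitian) : Antitone (sortedEigenvalues hA) :=
  LinearMap.IsSymmetric.eigenvalues_antitone _ _

lemma charpoly_eq_nodal_sortedEigenvalues (hA : A.IsHermitian) :
    A.charpoly = nodal Finset.univ (sortedEigenvalues hA) := by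
  have hroots := (isSymmetric_toEuclideanLin_iff.2 hA).roots_charpoly_eq_eigenvalues
    finrank_euclideanSpace_fin
  have hchar : A.toEuclideanLin.charpoly = A.charpoly := by
    rw [toEuclideanLin_eq_toLin_orthonormal, charpoly_toLin]
  rw [hchar] at hroots
  rw [hA.splits_charpoly.eq_prod_roots_of_monic A.charpoly_monic, hroots, Multiset.map_map]
  rfl

open scoped InnerProductSpace in
theorem sortedEigenvalues_submatrix_le (hA : A.IsHermitian) {m : ℕ} {f : Fin m → Fin n}
    (hf : Function.Injective f) {i : Fin m} {j : Fin n} (hji : (j : ℕ) ≤ i) :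
    sortedEigenvalues (hA.submatrix f) i ≤ sortedEigenvalues hA j := by
  set E : Matrix (Fin n) (Fin m) ℝ := (1 : Matrix (Fin n) (Fin n) ℝ).submatrix id f
  have hadj : ∀ x y, ⟪E.toEuclideanLin x, y⟫_ℝ = ⟪x, Eᴴ.toEuclideanLin y⟫_ℝ := fun x y => by
    rw [toEuclideanLin_conjTranspose_eq_adjoint, LinearMap.adjoint_inner_right]
  have hEE : Eᴴ * E = 1 := by
    ext a b
    simp [E, Matrix.mul_apply, Matrix.one_apply, hf.eq_iff]
  have hEAE : Eᴴ * (A * E) = A.submatrix f f := by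
    ext a b
    simp [E, Matrix.mul_apply, Matrix.one_apply]
  have hnorm : ∀ x, ‖E.toEuclideanLin x‖ = ‖x‖ := fun x => by
    rw [← sq_eq_sq₀ (norm_nonneg _) (norm_nonneg _), ← real_inner_self_eq_norm_sq, hadj,
      ← real_inner_self_eq_norm_sq, ← LinearMap.comp_apply, ← toLpLin_mul, hEE, toLpLin_one]
    rfl
  refine eigenvalues_compression_le _ _ _ _ ⟨E.toEuclideanLin, hnorm⟩ (fun x => ?_) hji
  rw [← hEAE, toLpLin_mul _ 2, toLpLin_mul _ 2]
  exact hadj _ _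

end SortedEigenvalues

section NewtonCone

open Polynomial Lagrange

variable {R : Type*} [CommRing R] {n : ℕ}

lemma nodal_Iio_zero (y : Fin (n + 1) → R) : nodal (Finset.Iio 0) y = 1 := by
  rw [Finset.Iio_eq_empty.2 (fun i _ => i.zero_le), nodal_empty]

lemma nodal_Iio_castSucc (y : Fin (n + 1) → R) (k : Fin n) :
    nodal (Finset.Iio k.castSucc) y = nodal (Finset.Iio k) (Fin.init y) :=
  Fin.prod_Iio_castSucc (fun i => X - C (y i)) k

lemma nodal_Iio_last (y : Fin (n + 1) → R) :
    nodal (Finset.Iio (Fin.last n)) y = nodal Finset.univ (Fin.init y) := by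
  rw [nodal, Fin.Iio_last_eq_map, Finset.prod_map]
  rfl

lemma nodal_Iio_succ (y : Fin (n + 1) → R) (k : Fin n) :
    nodal (Finset.Iio k.succ) y = (X - C (y 0)) * nodal (Finset.Iio k) (Fin.tail y) := by
  have hIio : Finset.Iio k.succ = insert 0 ((Finset.Iio k).map (Fin.succEmb n)) := by
    rw [Fin.map_succEmb_Iio, Finset.insert_eq]
    ext i
    induction i using Fin.cases <;> simp
  rw [hIio, nodal_insert_eq_nodal (by simp), nodal, Finset.prod_map]
  rfl

lemma linearIndependent_nodal_Iio [IsDomain R] (y : Fin n → R) :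
    LinearIndependent R fun k => nodal (Finset.Iio k) y := by
  let S : Polynomial.Sequence R :=
    ⟨fun i => if h : i < n then nodal (Finset.Iio ⟨i, h⟩) y else X ^ i, fun i => by
      split_ifs <;> simp [degree_nodal]⟩
  have hS : (fun k => nodal (Finset.Iio k) y) = S ∘ Fin.val := by
    ext1 k
    simp [S]
  exact hS ▸ S.linearIndependent.comp _ Fin.val_injective

variable [PartialOrder R] [IsOrderedRing R]

/-- The cone of nonnegative combinations of the Newton basis polynomials
`∏ i < k, (X - y i)`, `k : Fin n`. -/
noncomputable def newtonCone (y : Fin n → R) : PointedCone R R[X] :=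
  PointedCone.hull R (Set.range fun k => nodal (Finset.Iio k) y)

lemma newtonCone_init_le (y : Fin (n + 1) → R) : newtonCone (Fin.init y) ≤ newtonCone y := by
  refine Submodule.span_mono ?_
  rintro _ ⟨k, rfl⟩
  exact ⟨k.castSucc, nodal_Iio_castSucc y k⟩

lemma X_sub_C_mul_mem_newtonCone {y : Fin (n + 1) → R} {p : R[X]}
    (hp : p ∈ newtonCone (Fin.tail y)) : (X - C (y 0)) * p ∈ newtonCone y := by
  induction hp using Submodule.span_induction with
  | mem p hp =>
    obtain ⟨k, rfl⟩ := hp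
    exact Submodule.subset_span ⟨k.succ, nodal_Iio_succ y k⟩
  | zero => simp
  | add p q _ _ hp hq => exact mul_add (X - C (y 0)) p q ▸ Submodule.add_mem _ hp hq
  | smul c p _ hp => exact mul_smul_comm c (X - C (y 0)) p ▸ Submodule.smul_mem _ c hp

lemma nodal_Iio_mem_newtonCone {v y : Fin n → R} (k : Fin n)
    (h : ∀ i j, i ≤ j → j < k → v j ≤ y i) : nodal (Finset.Iio k) v ∈ newtonCone y := by
  induction n with
  | zero => exact k.elim0
  | succ n ih =>
    induction k using Fin.cases with
    | zero => exact Submodule.subset_span ⟨0, by simp only [nodal_Iio_zero]⟩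
    | succ k =>
      have hinit : nodal (Finset.Iio k) (Fin.tail v) ∈ newtonCone (Fin.init y) :=
        ih k fun i j hij hj => h _ _ (Fin.castSucc_lt_succ_iff.2 hij).le (Fin.succ_lt_succ_iff.2 hj)
      have htail : nodal (Finset.Iio k) (Fin.tail v) ∈ newtonCone (Fin.tail y) :=
        ih k fun i j hij hj => h _ _ (Fin.succ_le_succ_iff.2 hij) (Fin.succ_lt_succ_iff.2 hj)
      have hsplit : nodal (Finset.Iio k.succ) v =
          (y 0 - v 0) • nodal (Finset.Iio k) (Fin.tail v) +
            (X - C (y 0)) * nodal (Finset.Iio k) (Fin.tail v) := by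
        rw [nodal_Iio_succ, smul_eq_C_mul, C_sub]
        ring
      rw [hsplit]
      exact Submodule.add_mem _
        (PointedCone.smul_mem _ (sub_nonneg.2 (h 0 0 le_rfl k.succ_pos))
          (newtonCone_init_le y hinit))
        (X_sub_C_mul_mem_newtonCone htail)

lemma nodal_univ_mem_newtonCone {v : Fin n → R} {y : Fin (n + 1) → R}
    (h : ∀ i j, i ≤ j → v j ≤ y i.castSucc) : nodal Finset.univ v ∈ newtonCone y := by
  rw [← Fin.init_snoc (α := fun _ => R) (0 : R) v, ← nodal_Iio_last]
  refine nodal_Iio_mem_newtonCone _ fun i j hij hj => ?_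
  obtain ⟨j, rfl⟩ := Fin.exists_castSucc_eq.2 hj.ne
  obtain ⟨i, rfl⟩ := Fin.exists_castSucc_eq.2 (hij.trans_lt hj).ne
  simpa using h i j hij

lemma newtonCone_le_newtonCone {v y : Fin n → R} (h : ∀ i j, i ≤ j → v j ≤ y i) :
    newtonCone v ≤ newtonCone y := by
  refine Submodule.span_le.2 ?_
  rintro _ ⟨k, rfl⟩
  exact nodal_Iio_mem_newtonCone k fun i j hij _ => h i j hij

lemma nonneg_of_sum_smul_nodal_mem_newtonCone [IsDomain R] {y c : Fin n → R}
    (h : ∑ k, c k • nodal (Finset.Iio k) y ∈ newtonCone y) (k : Fin n) : 0 ≤ c k := by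
  obtain ⟨d, hd⟩ := (Submodule.mem_span_range_iff_exists_fun _).1 h
  have := Fintype.linearIndependent_iffₛ.1 (linearIndependent_nodal_Iio y) _ _ hd k
  exact this ▸ (d k).2

end NewtonCone

section CharmatrixAdjugate

open Polynomial Lagrange Matrix

variable {R ι : Type*} [CommRing R] {n : ℕ}

lemma nodal_univ_succ (y : Fin (n + 1) → R) :
    nodal Finset.univ y = (X - C (y 0)) * nodal Finset.univ (Fin.tail y) :=
  Fin.prod_univ_succ fun i => X - C (y i)

lemma nodal_Ioi_zero (y : Fin (n + 1) → R) :
    nodal (Finset.Ioi 0) y = nodal Finset.univ (Fin.tail y) :=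
  Fin.prod_Ioi_zero fun i => X - C (y i)

lemma nodal_Ioi_succ (y : Fin (n + 1) → R) (k : Fin n) :
    nodal (Finset.Ioi k.succ) y = nodal (Finset.Ioi k) (Fin.tail y) :=
  Fin.prod_Ioi_succ (fun i => X - C (y i)) k

lemma aeval_nodal_sub_aeval_nodal {S : Type*} [Ring S] [Algebra R S] {a b : S} (h : Commute a b)
    (y : Fin n → R) :
    aeval a (nodal Finset.univ y) - aeval b (nodal Finset.univ y) =
      (a - b) * ∑ k, aeval a (nodal (Finset.Iio k) y) * aeval b (nodal (Finset.Ioi k) y) := by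
  induction n with
  | zero => simp [nodal]
  | succ n ih =>
    have hcomm : Commute (a - b) (a - algebraMap R S (y 0)) :=
      ((Commute.refl a).sub_left h.symm).sub_right (Algebra.commutes _ _).symm
    simp only [Fin.sum_univ_succ, nodal_univ_succ, nodal_Iio_zero, nodal_Ioi_zero, nodal_Iio_succ,
      nodal_Ioi_succ, map_mul, map_sub, map_one, aeval_X, aeval_C, one_mul, mul_assoc,
      ← Finset.mul_sum]
    rw [mul_add, ← mul_assoc, hcomm.eq, mul_assoc, ← ih]
    noncomm_ring

variable [Fintype ι] [DecidableEq ι]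

lemma charmatrix_submatrix {κ : Type*} [Fintype κ] [DecidableEq κ] (A : Matrix ι ι R) {f : κ → ι}
    (hf : Function.Injective f) : (A.submatrix f f).charmatrix = A.charmatrix.submatrix f f := by
  ext1 i j
  simp [charmatrix_apply, diagonal_apply, hf.eq_iff]

lemma adjugate_charmatrix_self (A : Matrix (Fin (n + 1)) (Fin (n + 1)) R) (i : Fin (n + 1)) :
    A.charmatrix.adjugate i i = (A.submatrix i.succAbove i.succAbove).charpoly := by
  rw [adjugate_fin_succ_eq_det_submatrix, Matrix.charpoly,
    charmatrix_submatrix _ i.succAbove_right_injective, ← two_mul, pow_mul, neg_one_sq, one_pow,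
    one_mul]

lemma adjugate_charmatrix_succAbove (A : Matrix (Fin (n + 1)) (Fin (n + 1)) R) (i : Fin (n + 1))
    (j : Fin n) :
    A.charmatrix.adjugate i (i.succAbove j) = ∑ l, A i (i.succAbove l) •
      (A.submatrix i.succAbove i.succAbove).charmatrix.adjugate l j := by
  set B := A.submatrix i.succAbove i.succAbove
  let row : Fin n → R[X] := fun l => A.charmatrix.adjugate i (i.succAbove l)
  let offDiag : Fin n → R[X] := fun l => C (A i (i.succAbove l))
  have hrow : row ᵥ* B.charmatrix = B.charpoly • offDiag := by
    ext1 l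
    have h := congrFun (congrFun (adjugate_mul A.charmatrix) i) (i.succAbove l)
    rw [Matrix.mul_apply, Fin.sum_univ_succAbove _ i, adjugate_charmatrix_self,
      charmatrix_apply_ne _ _ _ (i.succAbove_ne l).symm, Matrix.smul_apply,
      one_apply_ne (i.succAbove_ne l).symm, smul_zero] at h
    rw [charmatrix_submatrix _ i.succAbove_right_injective]
    simp only [vecMul, dotProduct, submatrix_apply, Pi.smul_apply, smul_eq_mul, row, offDiag]
    linear_combination h
  have hsolve : row = offDiag ᵥ* B.charmatrix.adjugate := by
    refine IsSMulRegular.pi (fun _ => B.charpoly_monic.isRegular.left.isSMulRegular) ?_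
    change B.charpoly • row = B.charpoly • _
    rw [← smul_vecMul, ← hrow, vecMul_vecMul, mul_adjugate, vecMul_smul, vecMul_one]
    rfl
  rw [show A.charmatrix.adjugate i (i.succAbove j) = row j from rfl, hsolve]
  simp only [vecMul, dotProduct, smul_eq_C_mul, offDiag]

lemma adjugate_charmatrix_eq_sum {A : Matrix ι ι R} {y : Fin n → R}
    (hA : A.charpoly = nodal Finset.univ y) :
    A.charmatrix.adjugate =
      ∑ k, nodal (Finset.Iio k) y • (aeval A (nodal (Finset.Ioi k) y)).map C := by
  have hX (p : R[X]) : aeval (scalar ι X) p = p • (1 : Matrix ι ι R[X]) := by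
    rw [← scalarAlgHom_apply ι R, aeval_algHom_apply, aeval_X_left_apply, smul_one_eq_diagonal]
    rfl
  have hC (p : R[X]) : aeval (A.map C) p = (aeval A p).map C :=
    aeval_algHom_apply (CAlgHom (R := R)).mapMatrix A p
  set S := ∑ k, nodal (Finset.Iio k) y • (aeval A (nodal (Finset.Ioi k) y)).map C
  have hS : A.charmatrix * S = A.charpoly • (1 : Matrix ι ι R[X]) := by
    have hcomm : Commute (scalar ι (X : R[X])) (A.map C) := scalar_commute _ (Commute.all _) _
    have h := aeval_nodal_sub_aeval_nodal hcomm y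
    simp only [hX, hC, ← hA, aeval_self_charpoly, Matrix.map_zero _ C_0, sub_zero, Matrix.smul_mul,
      Matrix.one_mul] at h
    exact h.symm
  have hcancel : A.charpoly • A.charmatrix.adjugate = A.charpoly • S := by
    rw [← Matrix.mul_one A.charmatrix.adjugate, ← Matrix.mul_smul, ← hS, ← Matrix.mul_assoc,
      adjugate_mul, Matrix.smul_mul, Matrix.one_mul]
    rfl
  ext1 i j
  exact A.charpoly_monic.isRegular.left (congrFun (congrFun hcancel i) j)

end CharmatrixAdjugate

section MicchelliWilloughby

open Matrix Polynomial Lagrange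

variable {n : ℕ}

theorem adjugate_charmatrix_mem_newtonCone {A : Matrix (Fin n) (Fin n) ℝ} (hA : A.IsHermitian)
    (h0 : ∀ i j, 0 ≤ A i j) (i j : Fin n) :
    A.charmatrix.adjugate i j ∈ newtonCone (sortedEigenvalues hA) := by
  induction n with
  | zero => exact i.elim0
  | succ n ih =>
    have hB : (A.submatrix i.succAbove i.succAbove).IsHermitian := hA.submatrix _
    have hle : ∀ k l, k ≤ l → sortedEigenvalues hB l ≤ sortedEigenvalues hA k.castSucc :=
      fun k l hkl => sortedEigenvalues_submatrix_le hA i.succAbove_right_injective hkl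
    obtain rfl | ⟨j, rfl⟩ := Fin.eq_self_or_eq_succAbove i j
    · rw [adjugate_charmatrix_self, charpoly_eq_nodal_sortedEigenvalues hB]
      exact nodal_univ_mem_newtonCone hle
    · rw [adjugate_charmatrix_succAbove]
      refine Submodule.sum_mem _ fun l _ => PointedCone.smul_mem _ (h0 _ _) ?_
      exact newtonCone_init_le _ (newtonCone_le_newtonCone hle (ih hB (fun _ _ => h0 _ _) l j))

/-- The Micchelli–Willoughby property: `y` lists the eigenvalues of `M` in decreasing order and
every product `∏ i > k, (M - y i)` has nonnegative entries. -/
structure IsMicchelliWilloughby (M : Matrix (Fin n) (Fin n) ℝ) (y : Fin n → ℝ) : Prop where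
  antitone : Antitone y
  charpoly_eq : M.charpoly = nodal Finset.univ y
  aeval_nodal_nonneg : ∀ k i j, 0 ≤ aeval M (nodal (Finset.Ioi k) y) i j

theorem isMicchelliWilloughby_sortedEigenvalues {A : Matrix (Fin n) (Fin n) ℝ} (hA : A.IsHermitian)
    (h0 : ∀ i j, 0 ≤ A i j) :
    IsMicchelliWilloughby A (sortedEigenvalues hA) where
  antitone := sortedEigenvalues_antitone hA
  charpoly_eq := charpoly_eq_nodal_sortedEigenvalues hA
  aeval_nodal_nonneg k i j := by
    have h := adjugate_charmatrix_mem_newtonCone hA h0 i j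
    rw [adjugate_charmatrix_eq_sum (charpoly_eq_nodal_sortedEigenvalues hA), Matrix.sum_apply] at h
    simp only [Matrix.smul_apply, map_apply, smul_eq_mul, mul_comm _ (C _), ← smul_eq_C_mul] at h
    exact nonneg_of_sum_smul_nodal_mem_newtonCone h k

lemma semiconjBy_aeval {R S : Type*} [CommSemiring R] [Semiring S] [Algebra R S] {a x y : S}
    (h : SemiconjBy a x y) (p : R[X]) : SemiconjBy a (aeval x p) (aeval y p) := by
  induction p using Polynomial.induction_on' with
  | add p q hp hq => simpa only [map_add] using hp.add_right hq
  | monomial k c =>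
    simpa only [aeval_monomial] using
      SemiconjBy.mul_right (Algebra.commutes c a).symm (h.pow_right k)

lemma IsMicchelliWilloughby.of_semiconjBy_diagonal {M A : Matrix (Fin n) (Fin n) ℝ}
    {y d : Fin n → ℝ} (hd : ∀ i, 0 < d i) (h : SemiconjBy (diagonal d) M A)
    (hA : IsMicchelliWilloughby A y) :
    IsMicchelliWilloughby M y where
  antitone := hA.antitone
  charpoly_eq := by
    have hunit : IsUnit (diagonal d) := by simp [isUnit_diagonal, Pi.isUnit_iff, (hd _).ne']
    obtain ⟨u, hu⟩ := hunit
    rw [← hA.charpoly_eq, ← charpoly_units_conj u M, hu, h.eq, ← hu, Matrix.mul_assoc,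
      ← Matrix.coe_units_inv, Units.mul_inv, Matrix.mul_one]
  aeval_nodal_nonneg k i j := by
    have hij := congrFun (congrFun (semiconjBy_aeval h (nodal (Finset.Ioi k) y)).eq i) j
    rw [diagonal_mul, mul_diagonal] at hij
    have := mul_nonneg (hA.aeval_nodal_nonneg k i j) (hd j).le
    exact nonneg_of_mul_nonneg_right (hij ▸ this) (hd i)

theorem exists_isMicchelliWilloughby_of_detailedBalance {M : Matrix (Fin n) (Fin n) ℝ}
    (h0 : ∀ i j, 0 ≤ M i j) {p : Fin n → ℝ} (hp : ∀ i, 0 < p i)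
    (hrev : ∀ i j, p i * M i j = p j * M j i) : ∃ y, IsMicchelliWilloughby M y := by
  have hsqrt (i) : 0 < √(p i) := Real.sqrt_pos.2 (hp i)
  let A : Matrix (Fin n) (Fin n) ℝ := of fun i j => √(p i) * M i j / √(p j)
  have hA : A.IsHermitian := by
    ext i j
    have hi := Real.mul_self_sqrt (hp i).le
    have hj := Real.mul_self_sqrt (hp j).le
    simp only [conjTranspose_apply, A, of_apply, star_trivial]
    rw [div_eq_div_iff (hsqrt i).ne' (hsqrt j).ne']
    linear_combination hrev j i + M j i * hj - M i j * hi
  have hA0 : ∀ i j, 0 ≤ A i j := fun i j =>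
    div_nonneg (mul_nonneg (hsqrt i).le (h0 i j)) (hsqrt j).le
  have hMA : SemiconjBy (diagonal fun i => √(p i)) M A := by
    ext i j
    rw [diagonal_mul, mul_diagonal]
    exact (div_mul_cancel₀ _ (hsqrt j).ne').symm
  exact ⟨_, (isMicchelliWilloughby_sortedEigenvalues hA hA0).of_semiconjBy_diagonal hsqrt hMA⟩

end MicchelliWilloughby

section Closure

open Matrix Polynomial Lagrange

variable {n : ℕ}

lemma continuous_aeval_nodal {R S ι : Type*} [CommRing R] [TopologicalSpace R] [Ring S]
    [TopologicalSpace S] [IsTopologicalRing S] [Algebra R S] [ContinuousSMul R S] (s : Finset ι) :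
    Continuous fun x : S × (ι → R) => aeval x.1 (nodal s x.2) := by
  classical
  induction s using Finset.induction_on with
  | empty => simp only [nodal_empty, map_one]; fun_prop
  | insert i s hi ih =>
    simp only [nodal_insert_eq_nodal hi, map_mul, map_sub, aeval_X, aeval_C,
      Algebra.algebraMap_eq_smul_one]
    fun_prop

lemma isClosed_setOf_isMicchelliWilloughby :
    IsClosed {x : Matrix (Fin n) (Fin n) ℝ × (Fin n → ℝ) | IsMicchelliWilloughby x.1 x.2} := by
  have hiff (x : Matrix (Fin n) (Fin n) ℝ × (Fin n → ℝ)) : IsMicchelliWilloughby x.1 x.2 ↔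
      (∀ i j, i ≤ j → x.2 j ≤ x.2 i) ∧
      (∀ z, (scalar (Fin n) z - x.1).det = ∏ i, (z - x.2 i)) ∧
      ∀ k i j, 0 ≤ aeval x.1 (nodal (Finset.Ioi k) x.2) i j := by
    simp only [← eval_charpoly, ← eval_nodal]
    exact ⟨fun h => ⟨fun _ _ hij => h.1 hij, fun _ => by rw [h.2], h.3⟩,
      fun h => ⟨fun _ _ hij => h.1 _ _ hij, Polynomial.funext h.2.1, h.2.2⟩⟩
  simp only [hiff, Set.ofPred_and, Set.ofPred_forall]
  refine .inter ?_ (.inter ?_ ?_)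
  · exact isClosed_iInter fun i => isClosed_iInter fun j => isClosed_iInter fun _ =>
      isClosed_le (by fun_prop) (by fun_prop)
  · exact isClosed_iInter fun z => isClosed_eq (by fun_prop) (by fun_prop)
  · exact isClosed_iInter fun k => isClosed_iInter fun i => isClosed_iInter fun j =>
      isClosed_le continuous_const ((continuous_aeval_nodal _).matrix_elem i j)

lemma isClosed_rowStochastic {ι : Type*} [Fintype ι] [DecidableEq ι] :
    IsClosed (rowStochastic ℝ ι : Set (Matrix ι ι ℝ)) := by
  have : (rowStochastic ℝ ι : Set (Matrix ι ι ℝ)) = {M | (∀ i j, 0 ≤ M i j) ∧ M *ᵥ 1 = 1} := rfl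
  simp only [this, Set.ofPred_and, Set.ofPred_forall]
  refine .inter ?_ (isClosed_eq (by fun_prop) (by fun_prop))
  exact isClosed_iInter fun i => isClosed_iInter fun j => isClosed_le (by fun_prop) (by fun_prop)

lemma abs_le_one_of_isRoot_charpoly {ι : Type*} [Fintype ι] [DecidableEq ι] {M : Matrix ι ι ℝ}
    (hM : M ∈ rowStochastic ℝ ι) {μ : ℝ} (hμ : M.charpoly.IsRoot μ) : |μ| ≤ 1 := by
  have heig : Module.End.HasEigenvalue M.toLin' μ := by
    rwa [Module.End.hasEigenvalue_iff_isRoot_charpoly, charpoly_toLin']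
  obtain ⟨k, hk⟩ := eigenvalue_mem_ball heig
  have hoff : ∑ j ∈ Finset.univ.erase k, ‖M k j‖ = 1 - M k k := by
    rw [← sum_row_of_mem_rowStochastic hM k, ← Finset.add_sum_erase _ _ (Finset.mem_univ k),
      add_sub_cancel_left]
    exact Finset.sum_congr rfl fun j _ => Real.norm_of_nonneg (nonneg_of_mem_rowStochastic hM)
  rw [hoff, Metric.mem_closedBall, Real.dist_eq, abs_le] at hk
  have := nonneg_of_mem_rowStochastic hM (i := k) (j := k)
  exact abs_le.2 ⟨by linarith, by linarith⟩

-- The spectra stay in the compact cube `[-1, 1]ⁿ`, so the property survives projecting out `y`.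
lemma isClosed_setOf_exists_isMicchelliWilloughby :
    IsClosed {M | M ∈ rowStochastic ℝ (Fin n) ∧ ∃ y, IsMicchelliWilloughby M y} := by
  let T : Set (Matrix (Fin n) (Fin n) ℝ × Set.Icc (-1 : Fin n → ℝ) 1) :=
    {x | x.1 ∈ rowStochastic ℝ (Fin n) ∧ IsMicchelliWilloughby x.1 x.2}
  have hT : IsClosed T := (isClosed_rowStochastic.preimage continuous_fst).inter
    (isClosed_setOf_isMicchelliWilloughby.preimage
      (continuous_fst.prodMk (continuous_subtype_val.comp continuous_snd)))
  convert! isClosedMap_fst_of_compactSpace T hT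
  ext M
  constructor
  · rintro ⟨hM, y, hy⟩
    have hyM (i) : |y i| ≤ 1 := abs_le_one_of_isRoot_charpoly hM <| by
      rw [hy.charpoly_eq, IsRoot, eval_nodal_at_node (Finset.mem_univ i)]
    exact ⟨(M, ⟨y, fun i => (abs_le.1 (hyM i)).1, fun i => (abs_le.1 (hyM i)).2⟩), ⟨hM, hy⟩, rfl⟩
  · rintro ⟨⟨M, y⟩, ⟨hM, hy⟩, rfl⟩
    exact ⟨hM, y, hy⟩

theorem exists_isMicchelliWilloughby_of_mem_revClosure {P : Matrix (Fin n) (Fin n) ℝ}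
    (hP : P ∈ RevClosure n) : P ∈ rowStochastic ℝ (Fin n) ∧ ∃ y, IsMicchelliWilloughby P y := by
  refine closure_minimal ?_ isClosed_setOf_exists_isMicchelliWilloughby hP
  rintro M ⟨h0, h1, p, hp, -, hrev⟩
  exact ⟨mem_rowStochastic_iff_sum.2 ⟨h0, h1⟩,
    exists_isMicchelliWilloughby_of_detailedBalance h0 hp hrev⟩

end Closure

section Duality

open Matrix Polynomial Lagrange

variable {R K ι : Type*} [CommRing R] [Field K] [Fintype ι] [DecidableEq ι] {n : ℕ}

lemma aeval_mulVec_of_mulVec_eq_smul {P : Matrix ι ι R} {v : ι → R} {μ : R} (h : P *ᵥ v = μ • v)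
    (q : R[X]) : aeval P q *ᵥ v = q.eval μ • v := by
  induction q using Polynomial.induction_on with
  | C a => simp [Algebra.algebraMap_eq_smul_one, smul_mulVec]
  | add p q hp hq => rw [map_add, add_mulVec, hp, hq, eval_add, add_smul]
  | monomial k a ih =>
    rw [pow_succ, ← mul_assoc, map_mul, aeval_X, ← mulVec_mulVec, h, mulVec_smul, ih, eval_mul_X,
      mul_smul, smul_comm]

lemma vecMul_aeval_of_vecMul_eq_smul {P : Matrix ι ι R} {v : ι → R} {μ : R} (h : v ᵥ* P = μ • v)
    (q : R[X]) : v ᵥ* aeval P q = q.eval μ • v := by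
  induction q using Polynomial.induction_on with
  | C a => simp [Algebra.algebraMap_eq_smul_one, vecMul_smul]
  | add p q hp hq => rw [map_add, vecMul_add, hp, hq, eval_add, add_smul]
  | monomial k a ih =>
    rw [pow_succ, ← mul_assoc, map_mul, aeval_X, ← vecMul_vecMul, ih, smul_vecMul, h, eval_mul_X,
      mul_smul]

lemma eq_of_mulVec_eq_self {P : Matrix ι ι K} (h1 : P *ᵥ 1 = 1)
    (hsimple : P.charpoly.rootMultiplicity 1 = 1) {f : ι → K} (hf : P *ᵥ f = f) (i j : ι) :
    f i = f j := by
  have hfin := P.toLin'.finrank_eigenspace_le 1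
  rw [charpoly_toLin', hsimple, finrank_le_one_iff] at hfin
  obtain ⟨v, hv⟩ := hfin
  have hspan (w : ι → K) (hw : P *ᵥ w = w) : ∃ c : K, c • (v : ι → K) = w := by
    obtain ⟨c, hc⟩ := hv ⟨w, by rw [Module.End.mem_eigenspace_iff, toLin'_apply, hw, one_smul]⟩
    exact ⟨c, congrArg Subtype.val hc⟩
  obtain ⟨c, rfl⟩ := hspan f hf
  obtain ⟨d, hd⟩ := hspan 1 h1
  have hdi (k) : d * (v : ι → K) k = 1 := congrFun hd k
  have hvij : (v : ι → K) i = (v : ι → K) j :=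
    mul_left_cancel₀ (left_ne_zero_of_mul_eq_one (hdi i)) ((hdi i).trans (hdi j).symm)
  rw [Pi.smul_apply, Pi.smul_apply, hvij]

/-- The polynomial `∏ i > k, (P - y i)` in `P`, normalized to have unit row sums. These are the
links of the strong stationary dual of a chain with transition matrix `P` and eigenvalues `y`:
their rows lead from the point masses (`k` the last index) to the stationary law (`k = 0`).
The normalization is legitimate when `y i ≠ 1` for `i > k`. -/
noncomputable def dualLink (P : Matrix ι ι K) (y : Fin n → K) (k : Fin n) : Matrix ι ι K :=
  ((nodal (Finset.Ioi k) y).eval 1)⁻¹ • aeval P (nodal (Finset.Ioi k) y)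

variable {P : Matrix ι ι K}

lemma eval_one_nodal_Ioi_ne_zero {y : Fin n → K} {k : Fin n} (hy : ∀ i > k, y i ≠ 1) :
    (nodal (Finset.Ioi k) y).eval 1 ≠ 0 := by
  rw [eval_nodal]
  exact Finset.prod_ne_zero_iff.2 fun i hi => sub_ne_zero.2 (hy i (Finset.mem_Ioi.1 hi)).symm

lemma dualLink_mulVec_one (hP : P *ᵥ 1 = 1) {y : Fin n → K} {k : Fin n} (hy : ∀ i > k, y i ≠ 1) :
    dualLink P y k *ᵥ 1 = 1 := by
  rw [dualLink, smul_mulVec, aeval_mulVec_of_mulVec_eq_smul (hP.trans (one_smul K _).symm),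
    inv_smul_smul₀ (eval_one_nodal_Ioi_ne_zero hy)]

lemma vecMul_dualLink {p : ι → K} (hp : p ᵥ* P = p) {y : Fin n → K} {k : Fin n}
    (hy : ∀ i > k, y i ≠ 1) : p ᵥ* dualLink P y k = p := by
  rw [dualLink, vecMul_smul, vecMul_aeval_of_vecMul_eq_smul (hp.trans (one_smul K _).symm),
    inv_smul_smul₀ (eval_one_nodal_Ioi_ne_zero hy)]

lemma IsMicchelliWilloughby.dualLink_mem_rowStochastic {P : Matrix (Fin n) (Fin n) ℝ}
    {y : Fin n → ℝ} (h : IsMicchelliWilloughby P y) (hP : P *ᵥ 1 = 1) {k : Fin n}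
    (hy : ∀ i > k, y i < 1) : dualLink P y k ∈ rowStochastic ℝ (Fin n) := by
  refine ⟨fun i j => mul_nonneg (inv_nonneg.2 ?_) (h.aeval_nodal_nonneg k i j),
    dualLink_mulVec_one hP fun i hi => (hy i hi).ne⟩
  rw [eval_nodal]
  exact Finset.prod_nonneg fun i hi => sub_nonneg.2 (hy i (Finset.mem_Ioi.1 hi)).le

variable {y : Fin (n + 1) → K}

lemma dualLink_last (P : Matrix ι ι K) (y : Fin (n + 1) → K) : dualLink P y (Fin.last n) = 1 := by
  have : Finset.Ioi (Fin.last n) = ∅ := Finset.Ioi_eq_empty.2 isMax_top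
  simp [dualLink, this]

lemma mul_dualLink_succ (P : Matrix ι ι K) {i : Fin n} (hy : y i.succ ≠ 1) :
    P * dualLink P y i.succ =
      y i.succ • dualLink P y i.succ + (1 - y i.succ) • dualLink P y i.castSucc := by
  have hnodal : nodal (Finset.Ioi i.castSucc) y =
      (X - C (y i.succ)) * nodal (Finset.Ioi i.succ) y := by
    have hIoi : Finset.Ioi i.castSucc = insert i.succ (Finset.Ioi i.succ) := by
      rw [Finset.Ioi_insert]
      ext j
      simp [Fin.castSucc_lt_iff_succ_le]
    rw [hIoi, nodal_insert_eq_nodal (by simp)]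
  have heval : (nodal (Finset.Ioi i.castSucc) y).eval 1 =
      (1 - y i.succ) * (nodal (Finset.Ioi i.succ) y).eval 1 := by
    rw [hnodal, eval_mul, eval_sub, eval_X, eval_C]
  have haeval : aeval P (nodal (Finset.Ioi i.castSucc) y) =
      P * aeval P (nodal (Finset.Ioi i.succ) y) -
        y i.succ • aeval P (nodal (Finset.Ioi i.succ) y) := by
    rw [hnodal, map_mul, map_sub, aeval_X, aeval_C, sub_mul, ← Algebra.smul_def]
  rw [dualLink, dualLink, heval, haeval, mul_inv, mul_smul, smul_inv_smul₀ (sub_ne_zero.2 hy.symm),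
    mul_smul_comm, smul_sub, smul_comm (y i.succ), add_sub_cancel]

lemma mul_dualLink_zero (hP : P.charpoly = nodal Finset.univ y) (hy : y 0 = 1) :
    P * dualLink P y 0 = dualLink P y 0 := by
  have h := aeval_self_charpoly P
  rw [hP, nodal_univ_succ, ← nodal_Ioi_zero, hy, map_mul, map_sub, aeval_X, C_1, map_one, sub_mul,
    one_mul, sub_eq_zero] at h
  rw [dualLink, mul_smul_comm, h]

lemma dualLink_zero_apply (hP : P *ᵥ 1 = 1) (hchar : P.charpoly = nodal Finset.univ y)
    (hy0 : y 0 = 1) (hy : ∀ i : Fin n, y i.succ ≠ 1) {p : ι → K} (hp : p ᵥ* P = p)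
    (hp1 : ∑ i, p i = 1) (i j : ι) : dualLink P y 0 i j = p j := by
  have hne1 : ∀ k > 0, y k ≠ 1 := fun k hk => Fin.succ_pred k hk.ne' ▸ hy _
  have hsimple : P.charpoly.rootMultiplicity 1 = 1 := by
    have hne : (X - C 1) * nodal (Finset.Ioi 0) y ≠ 0 :=
      mul_ne_zero (X_sub_C_ne_zero 1) nodal_ne_zero
    rw [hchar, nodal_univ_succ, ← nodal_Ioi_zero, hy0, rootMultiplicity_mul hne,
      rootMultiplicity_X_sub_C_self, rootMultiplicity_eq_zero (eval_one_nodal_Ioi_ne_zero hne1)]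
  have hconst (k) : dualLink P y 0 k j = dualLink P y 0 i j :=
    eq_of_mulVec_eq_self (f := fun k => dualLink P y 0 k j) hP hsimple
      (funext fun k => congrFun (congrFun (mul_dualLink_zero hchar hy0) k) j) k i
  calc dualLink P y 0 i j = ∑ k, p k * dualLink P y 0 k j := by
        simp only [hconst, ← Finset.sum_mul, hp1, one_mul]
    _ = p j := congrFun (vecMul_dualLink hp hne1) j

end Duality

section Convergence

open Matrix Real

/-- The total variation distance between probability mass functions on a finite type, as half of
their `ℓ¹` distance. -/
noncomputable def tvDist {ι : Type*} [Fintype ι] (f g : ι → ℝ) : ℝ := (1 / 2) * ∑ i, |f i - g i|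

variable {ι : Type*} [Fintype ι] {n : ℕ}

lemma tvDist_self (f : ι → ℝ) : tvDist f f = 0 := by simp [tvDist]

lemma tvDist_smul_add_smul_le {f g p : ι → ℝ} {a b : ℝ} (ha : 0 ≤ a) (hb : 0 ≤ b)
    (hab : a + b = 1) :
    tvDist (a • f + b • g) p ≤ a * tvDist f p + b * tvDist g p := by
  have h (i) : |a * f i + b * g i - p i| ≤ a * |f i - p i| + b * |g i - p i| := calc
    _ = |a * (f i - p i) + b * (g i - p i)| := by congr 1; linear_combination p i * hab
    _ ≤ |a * (f i - p i)| + |b * (g i - p i)| := abs_add_le _ _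
    _ = _ := by rw [abs_mul, abs_mul, abs_of_nonneg ha, abs_of_nonneg hb]
  have hsum := Finset.sum_le_sum fun i (_ : i ∈ Finset.univ) => h i
  rw [Finset.sum_add_distrib, ← Finset.mul_sum, ← Finset.mul_sum] at hsum
  simp only [tvDist, Pi.add_apply, Pi.smul_apply, smul_eq_mul]
  linarith

lemma tvDist_le_one {f g : ι → ℝ} (hf : f ∈ stdSimplex ℝ ι) (hg : g ∈ stdSimplex ℝ ι) :
    tvDist f g ≤ 1 := by
  have h : ∑ i, |f i - g i| ≤ ∑ i, (f i + g i) := Finset.sum_le_sum fun i _ =>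
    abs_le.2 ⟨by linarith [hf.1 i], by linarith [hg.1 i]⟩
  rw [Finset.sum_add_distrib, hf.2, hg.2] at h
  rw [tvDist]
  linarith

-- `d t k` is dominated by the chance that a pure death chain started at `k`, which steps down from
-- `i + 1` with probability `1 - y i`, has not reached `0` by time `t`; the bound is Chernoff's.
lemma le_exp_mul_pow_of_pureDeath {d : ℕ → Fin (n + 1) → ℝ} {y : Fin n → ℝ} {b s : ℝ}
    (hd0 : ∀ t, d t 0 ≤ 0) (hd : ∀ k, d 0 k ≤ 1)
    (hstep : ∀ t i, d (t + 1) i.succ ≤ y i * d t i.succ + (1 - y i) * d t i.castSucc)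
    (hy : ∀ i, y i ∈ Set.Icc 0 b) (hb0 : 0 ≤ b) (hb1 : b ≤ 1) (hs : 0 ≤ s)
    (t : ℕ) (k : Fin (n + 1)) :
    d t k ≤ exp (s * (k - 1)) * (b + (1 - b) * exp (-s)) ^ t := by
  have hr : 0 ≤ b + (1 - b) * exp (-s) :=
    add_nonneg hb0 (mul_nonneg (sub_nonneg.2 hb1) (exp_pos _).le)
  induction t generalizing k with
  | zero =>
    cases k using Fin.cases with
    | zero => exact (hd0 0).trans (by positivity)
    | succ i =>
      have : 1 ≤ exp (s * i) := one_le_exp (by positivity)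
      simpa using (hd i.succ).trans this
  | succ t ih =>
    cases k using Fin.cases with
    | zero => exact (hd0 _).trans (by positivity)
    | succ i =>
      obtain ⟨hy0, hyb⟩ := hy i
      have hrate : y i + (1 - y i) * exp (-s) ≤ b + (1 - b) * exp (-s) := by
        have : exp (-s) ≤ 1 := exp_le_one_iff.2 (neg_nonpos.2 hs)
        nlinarith
      have hexp : exp (s * ((i.castSucc : ℕ) - 1)) = exp (-s) * exp (s * ((i.succ : ℕ) - 1)) := by
        rw [← exp_add, Fin.val_castSucc, Fin.val_succ]
        push_cast
        ring_nf
      have hy1 : 0 ≤ 1 - y i := sub_nonneg.2 (hyb.trans hb1)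
      set r := b + (1 - b) * exp (-s)
      set e := exp (s * ((i.succ : ℕ) - 1))
      calc d (t + 1) i.succ ≤ y i * d t i.succ + (1 - y i) * d t i.castSucc := hstep t i
        _ ≤ y i * (e * r ^ t) + (1 - y i) * (exp (-s) * e * r ^ t) := by
            gcongr
            · exact ih _
            · exact (ih _).trans_eq (by rw [hexp])
        _ = e * r ^ t * (y i + (1 - y i) * exp (-s)) := by ring
        _ ≤ e * r ^ t * r := by gcongr
        _ = e * r ^ (t + 1) := by ring

theorem IsMicchelliWilloughby.tvDist_pow_le {P : Matrix (Fin (n + 1)) (Fin (n + 1)) ℝ}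
    {y : Fin (n + 1) → ℝ} (h : IsMicchelliWilloughby P y) (hP : P ∈ rowStochastic ℝ (Fin (n + 1)))
    {p : Fin (n + 1) → ℝ} (hp : p ∈ stdSimplex ℝ (Fin (n + 1))) (hstat : p ᵥ* P = p)
    (hy0 : y 0 = 1) {b : ℝ} (hy : ∀ i : Fin n, y i.succ ∈ Set.Icc 0 b) (hb0 : 0 ≤ b) (hb1 : b < 1)
    {s : ℝ} (hs : 0 ≤ s) (t : ℕ) (x : Fin (n + 1)) :
    tvDist ((P ^ t) x) p ≤ exp (s * (n - 1)) * (b + (1 - b) * exp (-s)) ^ t := by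
  have hlt (i : Fin n) : y i.succ < 1 := (hy i).2.trans_lt hb1
  let d : ℕ → Fin (n + 1) → ℝ := fun t k => tvDist ((P ^ t * dualLink P y k) x) p
  have hd0 (t) : d t 0 ≤ 0 := by
    have hinv : P ^ t * dualLink P y 0 = dualLink P y 0 := by
      induction t with
      | zero => rw [pow_zero, one_mul]
      | succ t ih => rw [pow_succ, mul_assoc, mul_dualLink_zero h.charpoly_eq hy0, ih]
    have hrow : dualLink P y 0 x = p :=
      funext (dualLink_zero_apply hP.2 h.charpoly_eq hy0 (fun i => (hlt i).ne) hstat hp.2 x)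
    simp only [d, hinv, hrow, tvDist_self, le_refl]
  have hd (k) : d 0 k ≤ 1 := by
    have hE : dualLink P y k ∈ rowStochastic ℝ (Fin (n + 1)) :=
      h.dualLink_mem_rowStochastic hP.2 fun i hi =>
        Fin.succ_pred i (Fin.ne_zero_of_lt hi) ▸ hlt _
    simp only [d, pow_zero, one_mul]
    exact tvDist_le_one ⟨hE.1 x, sum_row_of_mem_rowStochastic hE x⟩ hp
  have hstep (t) (i : Fin n) :
      d (t + 1) i.succ ≤ y i.succ * d t i.succ + (1 - y i.succ) * d t i.castSucc := by
    simp only [d, pow_succ, mul_assoc, mul_dualLink_succ P (hlt i).ne, mul_add, mul_smul_comm]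
    exact tvDist_smul_add_smul_le (hy i).1 (sub_nonneg.2 (hlt i).le) (add_sub_cancel _ _)
  have := le_exp_mul_pow_of_pureDeath hd0 hd hstep hy hb0 hb1.le hs t (Fin.last n)
  simpa only [d, dualLink_last, mul_one, Fin.val_last] using this

lemma exp_neg_le_quadratic {s : ℝ} (hs : 0 ≤ s) : exp (-s) ≤ 1 - s + s ^ 2 / 2 := by
  have hexp := quadratic_le_exp_of_nonneg hs
  have hpos : 0 ≤ 1 - s + s ^ 2 / 2 := by nlinarith [sq_nonneg (s - 1)]
  rw [exp_neg, inv_le_iff_one_le_mul₀ (exp_pos s)]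
  calc 1 ≤ (1 - s + s ^ 2 / 2) * (1 + s + s ^ 2 / 2) := by nlinarith [sq_nonneg (s ^ 2)]
    _ ≤ (1 - s + s ^ 2 / 2) * exp s := by gcongr

lemma exists_mul_add_mul_exp_neg_le {a L μ : ℝ} (ha : 0 ≤ a) (hL : 0 < L)
    (hμ : a + 2 * L + √(2 * a * L) ≤ μ) : ∃ s ≥ 0, s * a + μ * (exp (-s) - 1) ≤ -L := by
  set r := √(2 * a * L)
  have hr0 : 0 ≤ r := sqrt_nonneg _
  have hr2 : r ^ 2 = 2 * a * L := sq_sqrt (by positivity)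
  have hμ0 : 0 < μ := by linarith
  have haμ : a ≤ μ := by linarith
  have hs : 0 ≤ (μ - a) / μ := div_nonneg (sub_nonneg.2 haμ) hμ0.le
  have hgap : 2 * L * μ ≤ (μ - a) ^ 2 := by nlinarith
  refine ⟨(μ - a) / μ, hs, ?_⟩
  calc (μ - a) / μ * a + μ * (exp (-((μ - a) / μ)) - 1)
      ≤ (μ - a) / μ * a + μ * (1 - (μ - a) / μ + ((μ - a) / μ) ^ 2 / 2 - 1) := by
        gcongr
        exact exp_neg_le_quadratic hs
    _ = -((μ - a) ^ 2 / (2 * μ)) := by field_simp; ring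
    _ ≤ -L := by
        rw [neg_le_neg_iff, le_div_iff₀ (by positivity)]
        linarith

lemma exists_exp_mul_pow_le {a b ε : ℝ} {t : ℕ} (ha : 0 ≤ a) (hb0 : 0 ≤ b) (hb1 : b ≤ 1)
    (hε0 : 0 < ε) (hε1 : ε < 1) (ht : a + 2 * log ε⁻¹ + √(2 * a * log ε⁻¹) ≤ t * (1 - b)) :
    ∃ s ≥ 0, exp (s * a) * (b + (1 - b) * exp (-s)) ^ t ≤ ε := by
  have hL : 0 < log ε⁻¹ := log_pos ((one_lt_inv₀ hε0).2 hε1)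
  obtain ⟨s, hs, h⟩ := exists_mul_add_mul_exp_neg_le ha hL ht
  have hbase : b + (1 - b) * exp (-s) ≤ exp ((1 - b) * (exp (-s) - 1)) := by
    linarith [add_one_le_exp ((1 - b) * (exp (-s) - 1))]
  have : 0 ≤ 1 - b := sub_nonneg.2 hb1
  refine ⟨s, hs, ?_⟩
  calc exp (s * a) * (b + (1 - b) * exp (-s)) ^ t
      ≤ exp (s * a) * exp ((1 - b) * (exp (-s) - 1)) ^ t := by gcongr
    _ = exp (s * a + t * (1 - b) * (exp (-s) - 1)) := by
        rw [← exp_nat_mul, ← exp_add, mul_assoc]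
    _ ≤ exp (-log ε⁻¹) := exp_le_exp.2 h
    _ = ε := by rw [log_inv, neg_neg, exp_log hε0]

lemma exists_nat_le_mul_and_le_mul_inv {R g : ℝ} (hR : 0 ≤ R) (hg0 : 0 < g) (hg1 : g ≤ 1) :
    ∃ t : ℕ, R ≤ t * g ∧ t ≤ (R + 1) * (1 / g) := by
  refine ⟨⌈R / g⌉₊, (div_le_iff₀ hg0).1 (Nat.le_ceil _), ?_⟩
  calc (⌈R / g⌉₊ : ℝ) ≤ R / g + 1 := (Nat.ceil_lt_add_one (div_nonneg hR hg0.le)).le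
    _ ≤ R / g + 1 / g := by gcongr; exact (one_le_div hg0).2 hg1
    _ = (R + 1) * (1 / g) := by ring

theorem IsMicchelliWilloughby.exists_tvDist_pow_le {m : ℕ}
    {P : Matrix (Fin (m + 2)) (Fin (m + 2)) ℝ} {y : Fin (m + 2) → ℝ}
    (h : IsMicchelliWilloughby P y) (hP : P ∈ rowStochastic ℝ (Fin (m + 2)))
    {p : Fin (m + 2) → ℝ} (hp : p ∈ stdSimplex ℝ (Fin (m + 2))) (hstat : p ᵥ* P = p)
    (hy0 : y 0 = 1) {b : ℝ} (hy : ∀ i : Fin (m + 1), y i.succ ∈ Set.Icc 0 b) (hb0 : 0 ≤ b)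
    (hb1 : b < 1) {ε : ℝ} (hε0 : 0 < ε) (hε1 : ε < 1) :
    ∃ t : ℕ, (∀ x, tvDist ((P ^ t) x) p ≤ ε) ∧
      t ≤ (m + 2 * log ε⁻¹ + √(2 * m * log ε⁻¹) + 1) * (1 / (1 - b)) := by
  have hL : 0 < log ε⁻¹ := log_pos ((one_lt_inv₀ hε0).2 hε1)
  have hR : 0 ≤ m + 2 * log ε⁻¹ + √(2 * m * log ε⁻¹) := by positivity
  obtain ⟨t, hRt, ht⟩ :=
    exists_nat_le_mul_and_le_mul_inv hR (sub_pos.2 hb1) (sub_le_self 1 hb0)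
  obtain ⟨s, hs, hchernoff⟩ := exists_exp_mul_pow_le m.cast_nonneg hb0 hb1.le hε0 hε1 hRt
  refine ⟨t, fun x => ?_, ht⟩
  have hx := h.tvDist_pow_le hP hp hstat hy0 hy hb0 hb1 hs t x
  rw [Nat.cast_succ, add_sub_cancel_right] at hx
  exact hx.trans hchernoff

end Convergence

section Roots

open Polynomial Lagrange

variable {R : Type*} [CommRing R] [IsDomain R]

lemma exists_eq_of_nodal_eq {ι κ : Type*} [Fintype ι] [Fintype κ] {y : ι → R}
    {β : κ → R} (h : nodal Finset.univ y = nodal Finset.univ β) (i : ι) :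
    ∃ j, y i = β j := by
  have hroot : (nodal Finset.univ β).eval (y i) = 0 :=
    h ▸ eval_nodal_at_node (Finset.mem_univ i)
  rw [eval_nodal] at hroot
  obtain ⟨j, -, hj⟩ := Finset.prod_eq_zero_iff.1 hroot
  exact ⟨j, sub_eq_zero.1 hj⟩

lemma eq_and_exists_eq_of_nodal_eq [PartialOrder R] {n : ℕ} {y β : Fin (n + 1) → R}
    (hy : Antitone y) (h : nodal Finset.univ y = nodal Finset.univ β)
    (hβ : ∀ j : Fin n, β j.castSucc ≤ β (Fin.last n)) :
    y 0 = β (Fin.last n) ∧ ∀ i : Fin n, ∃ j : Fin n, y i.succ = β j.castSucc := by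
  have hy0 : y 0 = β (Fin.last n) := by
    apply le_antisymm
    · obtain ⟨j, hj⟩ := exists_eq_of_nodal_eq h 0
      cases j using Fin.lastCases with
      | last => exact hj.le
      | cast j => exact hj.trans_le (hβ j)
    · obtain ⟨i, hi⟩ := exists_eq_of_nodal_eq h.symm (Fin.last n)
      exact hi.trans_le (hy i.zero_le)
  refine ⟨hy0, exists_eq_of_nodal_eq (y := Fin.tail y) (β := Fin.init β) ?_⟩
  have hβsplit : nodal Finset.univ β = nodal Finset.univ (Fin.init β) * (X - C (β (Fin.last n))) :=
    Fin.prod_univ_castSucc fun j => X - C (β j)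
  rw [nodal_univ_succ, hβsplit, hy0, mul_comm] at h
  exact mul_right_cancel₀ (X_sub_C_ne_zero _) h

end Roots

/-- Theorem 1.3 of the paper in the case of nonnegative eigenvalues: for reversible
`P` on `N` states with all eigenvalues nonnegative and absolute spectral gap
`1 - βs > 0`,
`t_mix(ε) ≤ (N + 2 log ε⁻¹ - 1 + √(2(N-2) log ε⁻¹)) · t_rel`. -/
theorem mixing_time_reversible_nonneg (N : ℕ) (hN : 2 ≤ N)
    (P : Matrix (Fin N) (Fin N) ℝ) (hPcl : P ∈ RevClosure N)
    (piv : Fin N → ℝ) (hpiv0 : ∀ i, 0 ≤ piv i) (hpiv1 : ∑ i, piv i = 1)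
    (hstat : ∀ j, ∑ i, piv i * P i j = piv j)
    (hrev : ∀ i j, piv i * P i j = piv j * P j i)
    (β : Fin N → ℝ)
    (hchar : P.charpoly = ∏ j, (Polynomial.X - Polynomial.C (β j)))
    (hβ0 : ∀ j, 0 ≤ β j)
    (hβlast : ∀ j : Fin N, (j : ℕ) = N - 1 → β j = 1)
    (βs : ℝ) (hβ : ∀ j : Fin N, (j : ℕ) < N - 1 → |β j| ≤ βs)
    (hβs0 : 0 ≤ βs) (hβs1 : βs < 1)
    (ε : ℝ) (hε0 : 0 < ε) (hε1 : ε < 1) :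
    ((sInf {t : ℕ | ∀ x, (1 / 2) * ∑ y, |(P ^ t) x y - piv y| ≤ ε} : ℕ) : ℝ) ≤
      ((N : ℝ) + 2 * Real.log ε⁻¹ - 1
          + Real.sqrt (2 * ((N - 2 : ℕ) : ℝ) * Real.log ε⁻¹)) * (1 / (1 - βs)) := by
  obtain ⟨m, rfl⟩ : ∃ m, N = m + 2 := ⟨N - 2, by omega⟩
  obtain ⟨hP, y, hy⟩ := exists_isMicchelliWilloughby_of_mem_revClosure hPcl
  have hβ1 : β (Fin.last (m + 1)) = 1 := hβlast _ rfl
  have hβb (j : Fin (m + 1)) : β j.castSucc ∈ Set.Icc 0 βs :=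
    ⟨hβ0 _, (le_abs_self _).trans (hβ j.castSucc j.isLt)⟩
  obtain ⟨hy0, hyβ⟩ := eq_and_exists_eq_of_nodal_eq hy.antitone (hy.charpoly_eq.symm.trans hchar)
    fun j => hβ1 ▸ (hβb j).2.trans hβs1.le
  have hyb (i : Fin (m + 1)) : y i.succ ∈ Set.Icc 0 βs := by
    obtain ⟨j, hj⟩ := hyβ i
    exact hj ▸ hβb j
  obtain ⟨t, hmix, ht⟩ := hy.exists_tvDist_pow_le hP ⟨hpiv0, hpiv1⟩ (funext hstat)
    (hy0.trans hβ1) hyb hβs0 hβs1 hε0 hε1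
  refine (Nat.cast_le.2 (Nat.sInf_le (Set.mem_ofPred.2 hmix))).trans (ht.trans_eq ?_)
  push_cast [Nat.add_sub_cancel]
  ring
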